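/- arXiv:1505.04885 — 6 statements merged into one kernel-verified Lean document; each statement's English description precedes it below -/
import Mathlib

section
/- Monotonicity of Kalman filter performance in packet reception probabilities (Lemma 1, general form): Let n, M, N be positive integers, A an n×n real matrix, X a positive semidefinite n×n real matrix, C_1,…,C_M row vectors in ℝ^{1×n}, and R = diag(r_1,…,r_M) a diagonal M×M matrix with r_i > 0 for all i. For each i let θ_i : {0,1}^N → {0,1} be monotone nondecreasing with respect to the coordinatewise order on {0,1}^N. For a parameter vector p ∈ [0,1]^N define the product Bernoulli weight μ_p(ω) = ∏_{j=1}^N p_j^{ω_j}(1−p_j)^{1−ω_j} for ω ∈ {0,1}^N, and define the expected correction term T_p(X) = Σ_{ω ∈ {0,1}^N} μ_p(ω) · A X C(ω)^T (C(ω) X C(ω)^T + R)^{−1} C(ω) X A^T, where C(ω) is the M×n matrix whose i-th row is θ_i(ω)·C_i. Then for any p, q ∈ [0,1]^N with p_j ≤ q_j for all j, the matrix T_q(X) − T_p(X) is positive semidefinite; equivalently, the one-step expected error covariance f_p(X) = A X A^T + Q − T_p(X) satisfies f_p(X) ≥ f_q(X) in the Loewner (positive semidefinite) order for any symmetric Q.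 -/
open Matrix Finset

lemma bern_mono : ∀ (N : ℕ) (p q : Fin N → ℝ) (_ : ∀ j, p j ∈ Set.Icc (0 : ℝ) 1)
    (_ : ∀ j, q j ∈ Set.Icc (0 : ℝ) 1) (_ : ∀ j, p j ≤ q j)
    (g : (Fin N → Bool) → ℝ) (_ : Monotone g),
    ∑ ω, (∏ j, if ω j then p j else 1 - p j) * g ω ≤
      ∑ ω, (∏ j, if ω j then q j else 1 - q j) * g ω := by
  intro N
  induction N with
  | zero => intro p q _ _ _ g _; simp
  | succ N ih =>
    intro p q hp hq hpq g hg
    have key : ∀ v : Fin (N+1) → ℝ,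
        ∑ ω, (∏ j, if ω j then v j else 1 - v j) * g ω =
        v 0 * (∑ ω : Fin N → Bool, (∏ j, if ω j then v j.succ else 1 - v j.succ) *
          g (Fin.cons true ω)) +
        (1 - v 0) * (∑ ω : Fin N → Bool, (∏ j, if ω j then v j.succ else 1 - v j.succ) *
          g (Fin.cons false ω)) := by
      intro v
      rw [← (Fin.consEquiv (fun _ : Fin (N+1) => Bool)).sum_comp, Fintype.sum_prod_type]
      simp [Fin.consEquiv, Fin.prod_univ_succ, Finset.mul_sum, mul_assoc]
    have hm : ∀ b : Bool, Monotone (fun ω : Fin N → Bool => g (Fin.cons b ω)) := by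
      intro b x y hxy
      apply hg
      intro i
      refine Fin.cases ?_ (fun j => ?_) i
      · simp
      · simpa using hxy j
    rw [key, key]
    have h1 := ih (fun j => p j.succ) (fun j => q j.succ) (fun j => hp _) (fun j => hq _)
      (fun j => hpq _) _ (hm true)
    have h0 := ih (fun j => p j.succ) (fun j => q j.succ) (fun j => hp _) (fun j => hq _)
      (fun j => hpq _) _ (hm false)
    have h01 : (∑ ω : Fin N → Bool, (∏ j, if ω j then q j.succ else 1 - q j.succ) *
          g (Fin.cons false ω)) ≤
        (∑ ω : Fin N → Bool, (∏ j, if ω j then q j.succ else 1 - q j.succ) *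
          g (Fin.cons true ω)) := by
      apply Finset.sum_le_sum
      intro ω _
      apply mul_le_mul_of_nonneg_left
      · apply hg
        intro i
        refine Fin.cases ?_ (fun j => ?_) i
        · simp
        · simp
      · apply Finset.prod_nonneg
        intro j _
        have := hq j.succ
        split_ifs
        · exact this.1
        · linarith [this.2]
    have hp0 := hp 0
    have e1 := mul_le_mul_of_nonneg_left h1 hp0.1
    have e0 := mul_le_mul_of_nonneg_left h0 (sub_nonneg.2 hp0.2)
    have e2 := mul_le_mul_of_nonneg_left h01 (sub_nonneg.2 (hpq 0))
    linarith

lemma var_le {M : ℕ} (S : Matrix (Fin M) (Fin M) ℝ) (hS : S.PosDef) (b w : Fin M → ℝ) :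
    2 * (w ⬝ᵥ b) - w ⬝ᵥ (S *ᵥ w) ≤ b ⬝ᵥ (S⁻¹ *ᵥ b) := by
  have hu : IsUnit S.det := (Matrix.isUnit_iff_isUnit_det _).1 hS.isUnit
  have hb : b = S *ᵥ (S⁻¹ *ᵥ b) := by
    rw [Matrix.mulVec_mulVec, Matrix.mul_nonsing_inv _ hu, Matrix.one_mulVec]
  generalize S⁻¹ *ᵥ b = z at hb
  subst hb
  have h := hS.posSemidef.dotProduct_mulVec_nonneg (w - z)
  have hsym : z ⬝ᵥ (S *ᵥ w) = w ⬝ᵥ (S *ᵥ z) := by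
    have ht : Sᵀ = S := (Matrix.conjTranspose_eq_transpose_of_trivial S).symm.trans hS.1
    rw [Matrix.dotProduct_mulVec, ← Matrix.mulVec_transpose, ht, dotProduct_comm]
  simp only [star_trivial, Matrix.mulVec_sub, sub_dotProduct, dotProduct_sub] at h
  rw [dotProduct_comm (S *ᵥ z) z]
  linarith

lemma var_eq {M : ℕ} (S : Matrix (Fin M) (Fin M) ℝ) (hS : S.PosDef) (b : Fin M → ℝ) :
    b ⬝ᵥ (S⁻¹ *ᵥ b) = 2 * ((S⁻¹ *ᵥ b) ⬝ᵥ b) - (S⁻¹ *ᵥ b) ⬝ᵥ (S *ᵥ (S⁻¹ *ᵥ b)) := by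
  have hu : IsUnit S.det := (Matrix.isUnit_iff_isUnit_det _).1 hS.isUnit
  rw [Matrix.mulVec_mulVec, Matrix.mul_nonsing_inv _ hu, Matrix.one_mulVec,
    dotProduct_comm b]
  ring

lemma S_posDef {n M : ℕ} (X : Matrix (Fin n) (Fin n) ℝ) (hX : X.PosSemidef)
    (r : Fin M → ℝ) (hr : ∀ i, 0 < r i) (D : Matrix (Fin M) (Fin n) ℝ) :
    (D * X * Dᵀ + Matrix.diagonal r).PosDef := by
  have h1 : (D * X * Dᵀ).PosSemidef := by
    simpa using hX.mul_mul_conjTranspose_same D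
  exact Matrix.PosDef.posSemidef_add h1 (Matrix.PosDef.diagonal hr)

lemma quad_mono {n M : ℕ} (X : Matrix (Fin n) (Fin n) ℝ) (hX : X.PosSemidef)
    (r : Fin M → ℝ) (hr : ∀ i, 0 < r i) (C : Fin M → Fin n → ℝ)
    (s t : Fin M → Bool) (hst : ∀ i, s i ≤ t i) (D E : Matrix (Fin M) (Fin n) ℝ)
    (hD : ∀ i j, D i j = if s i then C i j else 0)
    (hE : ∀ i j, E i j = if t i then C i j else 0) (u : Fin n → ℝ) :
    (D *ᵥ u) ⬝ᵥ ((D * X * Dᵀ + Matrix.diagonal r)⁻¹ *ᵥ (D *ᵥ u)) ≤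
    (E *ᵥ u) ⬝ᵥ ((E * X * Eᵀ + Matrix.diagonal r)⁻¹ *ᵥ (E *ᵥ u)) := by
  rw [var_eq _ (S_posDef X hX r hr D)]
  generalize (D * X * Dᵀ + Matrix.diagonal r)⁻¹ *ᵥ (D *ᵥ u) = w
  let w' : Fin M → ℝ := fun i => if s i then w i else 0
  refine le_trans ?_ (var_le _ (S_posDef X hX r hr E) _ w')
  have hw : w' ᵥ* E = w ᵥ* D := by
    ext j
    simp only [Matrix.vecMul, dotProduct]
    apply Finset.sum_congr rfl
    intro i _
    have hi : s i = true → t i = true := fun h => by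
      have h2 := hst i
      rw [h] at h2
      exact top_le_iff.1 h2
    rw [hD, hE]
    cases hs : s i <;> cases ht : t i <;> simp_all [w']
  have hq : ∀ (F : Matrix (Fin M) (Fin n) ℝ) (z : Fin M → ℝ),
      2 * (z ⬝ᵥ (F *ᵥ u)) - z ⬝ᵥ ((F * X * Fᵀ + Matrix.diagonal r) *ᵥ z) =
      2 * ((z ᵥ* F) ⬝ᵥ u) - (z ᵥ* F) ⬝ᵥ (X *ᵥ (z ᵥ* F)) - ∑ i, r i * (z i)^2 := by
    intro F z
    rw [Matrix.add_mulVec, dotProduct_add, Matrix.dotProduct_mulVec z F, Matrix.mul_assoc,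
      ← Matrix.mulVec_mulVec, ← Matrix.mulVec_mulVec, Matrix.dotProduct_mulVec z F,
      Matrix.mulVec_transpose]
    have : z ⬝ᵥ (Matrix.diagonal r *ᵥ z) = ∑ i, r i * (z i)^2 := by
      simp only [dotProduct, Matrix.mulVec_diagonal]
      exact Finset.sum_congr rfl fun i _ => by ring
    rw [this]; ring
  rw [hq, hq, hw]
  have : ∑ i, r i * (w' i)^2 ≤ ∑ i, r i * (w i)^2 := by
    apply Finset.sum_le_sum
    intro i _
    apply mul_le_mul_of_nonneg_left _ (hr i).le
    simp only [w']
    split_ifs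
    · exact le_rfl
    · nlinarith [sq_nonneg (w i)]
  linarith

/-- Monotonicity of the expected Kalman correction term (hence of the one-step expected
error covariance) in the packet reception probabilities, for monotone Boolean
reconstruction indicators `θ i` (Lemma 1, general form). -/
theorem expected_kalman_correction_monotone_in_reception_probabilities
    (n M N : ℕ) (hn : 0 < n) (hM : 0 < M) (hN : 0 < N)
    (A : Matrix (Fin n) (Fin n) ℝ)
    (X : Matrix (Fin n) (Fin n) ℝ) (hX : X.PosSemidef)
    (C : Fin M → Fin n → ℝ)
    (r : Fin M → ℝ) (hr : ∀ i, 0 < r i)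
    (θ : Fin M → (Fin N → Bool) → Bool)
    (hθ : ∀ i, Monotone (θ i))
    (Q : Matrix (Fin n) (Fin n) ℝ) (hQ : Q.IsSymm)
    (p q : Fin N → ℝ)
    (hp : ∀ j, p j ∈ Set.Icc (0 : ℝ) 1) (hq : ∀ j, q j ∈ Set.Icc (0 : ℝ) 1)
    (hpq : ∀ j, p j ≤ q j)
    -- the product Bernoulli weight μ_v(ω) = ∏_j v_j^{ω_j} (1-v_j)^{1-ω_j}
    (μ : (Fin N → ℝ) → (Fin N → Bool) → ℝ)
    (hμ : ∀ v ω, μ v ω = ∏ j, if ω j then v j else 1 - v j)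
    -- C(ω) is the M×n matrix whose i-th row is θ_i(ω)·C_i
    (Cmat : (Fin N → Bool) → Matrix (Fin M) (Fin n) ℝ)
    (hCmat : ∀ ω i j, Cmat ω i j = if θ i ω then C i j else 0)
    -- the expected correction term T_v(X)
    (T : (Fin N → ℝ) → Matrix (Fin n) (Fin n) ℝ)
    (hT : ∀ v, T v = ∑ ω : Fin N → Bool, μ v ω •
      (A * X * (Cmat ω)ᵀ * (Cmat ω * X * (Cmat ω)ᵀ + Matrix.diagonal r)⁻¹ *
        Cmat ω * X * Aᵀ))
    -- the one-step expected error covariance f_v(X)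
    (f : (Fin N → ℝ) → Matrix (Fin n) (Fin n) ℝ)
    (hf : ∀ v, f v = A * X * Aᵀ + Q - T v) :
    (T q - T p).PosSemidef ∧ (f p - f q).PosSemidef := by
  have hXt : Xᵀ = X := (Matrix.conjTranspose_eq_transpose_of_trivial X).symm.trans hX.1
  have hqf : ∀ ω x, x ⬝ᵥ ((A * X * (Cmat ω)ᵀ *
      (Cmat ω * X * (Cmat ω)ᵀ + Matrix.diagonal r)⁻¹ * Cmat ω * X * Aᵀ) *ᵥ x) =
      (Cmat ω *ᵥ (X *ᵥ (Aᵀ *ᵥ x))) ⬝ᵥ ((Cmat ω * X * (Cmat ω)ᵀ + Matrix.diagonal r)⁻¹ *ᵥ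
        (Cmat ω *ᵥ (X *ᵥ (Aᵀ *ᵥ x)))) := by
    intro ω x
    simp only [← Matrix.mulVec_mulVec]
    rw [Matrix.dotProduct_mulVec x A, Matrix.dotProduct_mulVec _ X,
      Matrix.dotProduct_mulVec _ (Cmat ω)ᵀ, Matrix.vecMul_transpose, ← Matrix.mulVec_transpose X,
      hXt, ← Matrix.mulVec_transpose A]
  have hherm : ∀ v, (T v)ᵀ = T v := by
    intro v
    rw [hT, Matrix.transpose_sum]
    refine Finset.sum_congr rfl fun ω _ => ?_
    have hS : (Cmat ω * X * (Cmat ω)ᵀ + Matrix.diagonal r)ᵀ =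
        Cmat ω * X * (Cmat ω)ᵀ + Matrix.diagonal r :=
      (Matrix.conjTranspose_eq_transpose_of_trivial _).symm.trans
        (S_posDef X hX r hr (Cmat ω)).1
    generalize Cmat ω * X * (Cmat ω)ᵀ + Matrix.diagonal r = S at hS
    rw [Matrix.transpose_smul]
    simp only [Matrix.transpose_mul, Matrix.transpose_transpose, Matrix.transpose_nonsing_inv,
      hS, hXt, Matrix.mul_assoc]
  have main : (T q - T p).PosSemidef := by
    refine Matrix.PosSemidef.of_dotProduct_mulVec_nonneg ?_ ?_
    · show (T q - T p)ᴴ = _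
      rw [Matrix.conjTranspose_eq_transpose_of_trivial, Matrix.transpose_sub, hherm, hherm]
    · intro x
      have hx : ∀ v, x ⬝ᵥ (T v *ᵥ x) = ∑ ω, (∏ j, if ω j then v j else 1 - v j) *
          ((Cmat ω *ᵥ (X *ᵥ (Aᵀ *ᵥ x))) ⬝ᵥ
            ((Cmat ω * X * (Cmat ω)ᵀ + Matrix.diagonal r)⁻¹ *ᵥ
              (Cmat ω *ᵥ (X *ᵥ (Aᵀ *ᵥ x))))) := by
        intro v
        rw [hT, Matrix.sum_mulVec, dotProduct_sum]
        refine Finset.sum_congr rfl fun ω _ => ?_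
        rw [Matrix.smul_mulVec, dotProduct_smul, hqf, hμ, smul_eq_mul]
      rw [star_trivial, Matrix.sub_mulVec, dotProduct_sub, hx, hx, sub_nonneg]
      refine bern_mono N p q hp hq hpq _ ?_
      intro ω ω' h
      exact quad_mono X hX r hr C (fun i => θ i ω) (fun i => θ i ω') (fun i => hθ i h) _ _
        (hCmat ω) (hCmat ω') _
  refine ⟨main, ?_⟩
  have : f p - f q = T q - T p := by rw [hf, hf]; abel
  rw [this]; exact main
end

section
/- Monotonicity of Kalman filter performance in sensor signal-to-noise ratios (Lemma 2): Let n, M be positive integers, A an n×n real matrix, X a positive definite n×n real matrix, and let μ be any probability distribution on {0,1}^M (weights μ(ω) ≥ 0 summing to 1). Let C_1,…,C_M and D_1,…,D_M be row vectors in ℝ^{1×n}, and r_1,…,r_M, s_1,…,s_M positive reals, such that for a fixed index i one has C_j = D_j and r_j = s_j for all j ≠ i, and the n×n matrix (1/r_i) C_i^T C_i − (1/s_i) D_i^T D_i is negative semidefinite (i.e., C_i^T r_i^{−1} C_i ≤ D_i^T s_i^{−1} D_i in the Loewner order). Define f_C(X) = A X A^T + Q − Σ_{ω ∈ {0,1}^M}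 μ(ω) · A X C(ω)^T (C(ω) X C(ω)^T + R)^{−1} C(ω) X A^T, where C(ω) is the M×n matrix with i-th row ω_i·C_i and R = diag(r_1,…,r_M); define f_D(X) analogously using the rows D_i and S = diag(s_1,…,s_M). Then f_C(X) − f_D(X) is positive semidefinite, i.e., f_C(X) ≥ f_D(X) in the Loewner order. -/
open Matrix Finset

theorem aux_inv_anti {n : ℕ} {P Q : Matrix (Fin n) (Fin n) ℝ} (hP : P.PosDef) (hQ : Q.PosDef)
    (h : (Q - P).PosSemidef) : (P⁻¹ - Q⁻¹).PosSemidef := by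
  have hP' : (P⁻¹).PosDef := hP.inv
  haveI : Invertible Q := hQ.isUnit.invertible
  haveI : Invertible (P⁻¹) := hP'.isUnit.invertible
  have h1 := Matrix.PosDef.fromBlocks₁₁ (1 : Matrix (Fin n) (Fin n) ℝ) (P⁻¹) hQ
  have h2 := Matrix.PosDef.fromBlocks₂₂ Q (1 : Matrix (Fin n) (Fin n) ℝ) hP'
  have h3 : P⁻¹⁻¹ = P := Matrix.nonsing_inv_nonsing_inv P ((Matrix.isUnit_iff_isUnit_det _).1 hP.isUnit)
  simp only [conjTranspose_one, Matrix.one_mul, Matrix.mul_one, h3] at h1 h2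
  exact h1.1 (h2.2 h)

theorem aux_diag {M : ℕ} {r : Fin M → ℝ} (hr : ∀ i, 0 < r i) :
    (Matrix.diagonal r)⁻¹ = Matrix.diagonal (fun k => (r k)⁻¹) := by
  apply Matrix.inv_eq_right_inv
  rw [Matrix.diagonal_mul_diagonal, ← Matrix.diagonal_one]
  congr 1
  funext k
  exact mul_inv_cancel₀ (hr k).ne'

theorem aux_gram {n M : ℕ} (G : Matrix (Fin M) (Fin n) ℝ) {r : Fin M → ℝ} (hr : ∀ i, 0 < r i) :
    Gᵀ * (Matrix.diagonal r)⁻¹ * G = ∑ k, (r k)⁻¹ • Matrix.vecMulVec (G k) (G k) := by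
  rw [aux_diag hr]
  ext a b
  rw [Matrix.mul_apply, Matrix.sum_apply]
  refine Finset.sum_congr rfl fun k _ => ?_
  simp [Matrix.mul_diagonal, Matrix.vecMulVec_apply]
  ring

theorem aux_posDef {n M : ℕ} {X : Matrix (Fin n) (Fin n) ℝ} (hX : X.PosDef)
    (G : Matrix (Fin M) (Fin n) ℝ) {r : Fin M → ℝ} (hr : ∀ i, 0 < r i) :
    (X⁻¹ + Gᵀ * (Matrix.diagonal r)⁻¹ * G).PosDef := by
  refine hX.inv.add_posSemidef ?_
  have := ((Matrix.PosDef.diagonal hr).inv.posSemidef).conjTranspose_mul_mul_same G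
  rwa [conjTranspose_eq_transpose_of_trivial] at this

theorem aux_woodbury {n M : ℕ} {X : Matrix (Fin n) (Fin n) ℝ} (hX : X.PosDef)
    (G : Matrix (Fin M) (Fin n) ℝ) {r : Fin M → ℝ} (hr : ∀ i, 0 < r i) :
    (X⁻¹ + Gᵀ * (Matrix.diagonal r)⁻¹ * G)⁻¹ =
      X - X * Gᵀ * (G * X * Gᵀ + Matrix.diagonal r)⁻¹ * G * X := by
  have hD : (Matrix.diagonal r).PosDef := Matrix.PosDef.diagonal hr
  have hXX : X⁻¹⁻¹ = X :=
    Matrix.nonsing_inv_nonsing_inv X ((Matrix.isUnit_iff_isUnit_det _).1 hX.isUnit)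
  have hDD : (Matrix.diagonal r)⁻¹⁻¹ = Matrix.diagonal r :=
    Matrix.nonsing_inv_nonsing_inv _ ((Matrix.isUnit_iff_isUnit_det _).1 hD.isUnit)
  have hpd : (Matrix.diagonal r + G * X * Gᵀ).PosDef := by
    refine hD.add_posSemidef ?_
    have := hX.posSemidef.mul_mul_conjTranspose_same G
    rwa [conjTranspose_eq_transpose_of_trivial] at this
  have := Matrix.add_mul_mul_inv_eq_sub X⁻¹ Gᵀ (Matrix.diagonal r)⁻¹ G hX.inv.isUnit
    hD.inv.isUnit (by rw [hXX, hDD]; exact hpd.isUnit)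
  rw [this, hXX, hDD, add_comm (G * X * Gᵀ)]

/-- Monotonicity of the one-step expected Kalman error covariance in a single sensor's
signal-to-noise ratio `Cᵢᵀ rᵢ⁻¹ Cᵢ` (Lemma 2). -/
theorem expected_kalman_covariance_monotone_in_snr
    (n M : ℕ) (hn : 0 < n) (hM : 0 < M)
    (A : Matrix (Fin n) (Fin n) ℝ)
    (X : Matrix (Fin n) (Fin n) ℝ) (hX : X.PosDef)
    -- μ is a probability distribution on {0,1}^M
    (μ : (Fin M → Bool) → ℝ) (hμ0 : ∀ ω, 0 ≤ μ ω) (hμ1 : ∑ ω, μ ω = 1)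
    (C D : Fin M → Fin n → ℝ)
    (r s : Fin M → ℝ) (hr : ∀ i, 0 < r i) (hs : ∀ i, 0 < s i)
    (i : Fin M)
    (hCD : ∀ j, j ≠ i → C j = D j ∧ r j = s j)
    -- Cᵢᵀ rᵢ⁻¹ Cᵢ ≤ Dᵢᵀ sᵢ⁻¹ Dᵢ in the Loewner order
    (hSNR : ((s i)⁻¹ • Matrix.vecMulVec (D i) (D i) -
      (r i)⁻¹ • Matrix.vecMulVec (C i) (C i)).PosSemidef)
    (Q : Matrix (Fin n) (Fin n) ℝ)
    -- C(ω) has i-th row ωᵢ·Cᵢ, and analogously D(ω)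
    (CM DM : (Fin M → Bool) → Matrix (Fin M) (Fin n) ℝ)
    (hCM : ∀ ω k j, CM ω k j = if ω k then C k j else 0)
    (hDM : ∀ ω k j, DM ω k j = if ω k then D k j else 0)
    (fC fD : Matrix (Fin n) (Fin n) ℝ)
    (hfC : fC = A * X * Aᵀ + Q - ∑ ω : Fin M → Bool, μ ω •
      (A * X * (CM ω)ᵀ * (CM ω * X * (CM ω)ᵀ + Matrix.diagonal r)⁻¹ * CM ω * X * Aᵀ))
    (hfD : fD = A * X * Aᵀ + Q - ∑ ω : Fin M → Bool, μ ω •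
      (A * X * (DM ω)ᵀ * (DM ω * X * (DM ω)ᵀ + Matrix.diagonal s)⁻¹ * DM ω * X * Aᵀ)) :
    (fC - fD).PosSemidef := by
  have key : ∀ ω, (μ ω •
      (A * X * (DM ω)ᵀ * (DM ω * X * (DM ω)ᵀ + Matrix.diagonal s)⁻¹ * DM ω * X * Aᵀ) - μ ω •
      (A * X * (CM ω)ᵀ * (CM ω * X * (CM ω)ᵀ + Matrix.diagonal r)⁻¹ * CM ω * X * Aᵀ)).PosSemidef := by
    intro ω
    have hC := aux_posDef hX (CM ω) hr
    have hD := aux_posDef hX (DM ω) hs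
    have hdiff : ((X⁻¹ + (DM ω)ᵀ * (Matrix.diagonal s)⁻¹ * DM ω) -
        (X⁻¹ + (CM ω)ᵀ * (Matrix.diagonal r)⁻¹ * CM ω)).PosSemidef := by
      rw [add_sub_add_left_eq_sub, aux_gram _ hr, aux_gram _ hs, ← Finset.sum_sub_distrib]
      refine Matrix.posSemidef_sum _ fun k _ => ?_
      by_cases hω : ω k = true
      · have h1 : CM ω k = C k := by funext j; simp [hCM, hω]
        have h2 : DM ω k = D k := by funext j; simp [hDM, hω]
        rw [h1, h2]
        by_cases hk : k = i
        · rw [hk]; exact hSNR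
        · rw [(hCD k hk).1, (hCD k hk).2, sub_self]
          exact Matrix.PosSemidef.zero
      · have h1 : CM ω k = 0 := by funext j; simp [hCM, hω]
        have h2 : DM ω k = 0 := by funext j; simp [hDM, hω]
        rw [h1, h2]
        simpa using Matrix.PosSemidef.zero
    have h := aux_inv_anti hC hD hdiff
    rw [aux_woodbury hX _ hr, aux_woodbury hX _ hs, sub_sub_sub_cancel_left] at h
    have h' := (h.mul_mul_conjTranspose_same A).smul (hμ0 ω)
    rw [conjTranspose_eq_transpose_of_trivial] at h'
    rw [← smul_sub]
    convert h' using 2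
    simp only [Matrix.mul_sub, Matrix.sub_mul, Matrix.mul_assoc]
  have hsum := Matrix.posSemidef_sum Finset.univ fun ω _ => key ω
  rw [Finset.sum_sub_distrib] at hsum
  rw [hfC, hfD, sub_sub_sub_cancel_left]
  exact hsum
end

section
/- Sample-path monotonicity of the Kalman correction term under loss of measurements: Let X be an n×n positive definite real matrix, A any n×n real matrix, C an M×n real matrix with rows C_1,…,C_M, and R = diag(r_1,…,r_M) a diagonal matrix with r_i > 0. Let D be the M×n matrix obtained from C by replacing the rows with indices outside some subset I ⊆ {1,…,M} with zero rows (i.e., the i-th row of D is C_i if i ∈ I and 0 otherwise). Then A X C^T (C X C^T + R)^{−1} C X A^T − A X D^T (D X D^T + R)^{−1} D X A^T is positive semidefinite. -/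
open Matrix

/-- Sample-path monotonicity of the Kalman correction term under loss of measurements
(inequality (14)): zeroing out the rows of `C` outside `I` cannot increase the
correction term `A X Cᵀ (C X Cᵀ + R)⁻¹ C X Aᵀ` in the Loewner order. -/
theorem kalman_correction_monotone_under_row_zeroing
    (n M : ℕ)
    (X : Matrix (Fin n) (Fin n) ℝ) (hX : X.PosDef)
    (A : Matrix (Fin n) (Fin n) ℝ)
    (C : Matrix (Fin M) (Fin n) ℝ)
    (r : Fin M → ℝ) (hr : ∀ i, 0 < r i)
    (I : Finset (Fin M))
    (D : Matrix (Fin M) (Fin n) ℝ)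
    (hD : ∀ i j, D i j = if i ∈ I then C i j else 0) :
    (A * X * Cᵀ * (C * X * Cᵀ + Matrix.diagonal r)⁻¹ * C * X * Aᵀ -
      A * X * Dᵀ * (D * X * Dᵀ + Matrix.diagonal r)⁻¹ * D * X * Aᵀ).PosSemidef := by
  have hXt : Xᵀ = X := by simpa using hX.isHermitian.eq
  obtain ⟨P, hP⟩ : ∃ P : Matrix (Fin M) (Fin M) ℝ,
      P = Matrix.diagonal (fun i => if i ∈ I then (1 : ℝ) else 0) := ⟨_, rfl⟩
  have hPt : Pᵀ = P := by rw [hP, diagonal_transpose]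
  have hPP : P * P = P := by
    rw [hP, diagonal_mul_diagonal]; congr 1; ext i; split_ifs <;> simp
  have hPR : P * Matrix.diagonal r * P = Matrix.diagonal r * P := by
    rw [hP, diagonal_mul_diagonal, diagonal_mul_diagonal, diagonal_mul_diagonal]
    congr 1; ext i; split_ifs <;> simp
  have hDP : D = P * C := by
    ext i j; rw [hP, diagonal_mul, hD]; split_ifs <;> simp
  have hR : (Matrix.diagonal r).PosDef := PosDef.diagonal hr
  have key : ∀ B : Matrix (Fin M) (Fin n) ℝ, (B * X * Bᵀ + Matrix.diagonal r).PosDef := by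
    intro B
    have h := hX.posSemidef.mul_mul_conjTranspose_same B
    rw [conjTranspose_eq_transpose_of_trivial] at h
    exact PosDef.posSemidef_add h hR
  have hS := key C
  have hT := key D
  have hPST : P * (C * X * Cᵀ + Matrix.diagonal r) * P = (D * X * Dᵀ + Matrix.diagonal r) * P := by
    rw [Matrix.mul_add, Matrix.add_mul, Matrix.add_mul, hPR, hDP, transpose_mul, hPt]
    congr 1
    simp only [Matrix.mul_assoc, hPP]
  have hDt : Dᵀ = Cᵀ * P := by rw [hDP, transpose_mul, hPt]
  generalize hSd : C * X * Cᵀ + Matrix.diagonal r = S at *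
  generalize hTd : D * X * Dᵀ + Matrix.diagonal r = T at *
  have hSu : IsUnit S.det := (Matrix.isUnit_iff_isUnit_det _).1 hS.isUnit
  have hTu : IsUnit T.det := (Matrix.isUnit_iff_isUnit_det _).1 hT.isUnit
  have hSit : (S⁻¹)ᵀ = S⁻¹ := by simpa using hS.inv.isHermitian.eq
  have hTit : (T⁻¹)ᵀ = T⁻¹ := by simpa using hT.inv.isHermitian.eq
  obtain ⟨K, hK⟩ : ∃ K, K = P * T⁻¹ * P := ⟨_, rfl⟩
  have hKt : Kᵀ = K := by
    rw [hK, transpose_mul, transpose_mul, hPt, hTit, Matrix.mul_assoc]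
  have hKSK : K * S * K = K := by
    calc K * S * K = P * T⁻¹ * (P * S * P) * T⁻¹ * P := by
          rw [hK]; simp only [Matrix.mul_assoc]
      _ = P * (T⁻¹ * T) * P * T⁻¹ * P := by rw [hPST]; simp only [Matrix.mul_assoc]
      _ = K := by rw [Matrix.nonsing_inv_mul _ hTu, Matrix.mul_one, hPP, hK]
  have hdiff : (S⁻¹ - K) * S * (S⁻¹ - K)ᵀ = S⁻¹ - K := by
    rw [transpose_sub, hSit, hKt, Matrix.sub_mul, Matrix.nonsing_inv_mul _ hSu, Matrix.mul_sub,
      Matrix.sub_mul, Matrix.sub_mul, hKSK, Matrix.one_mul, Matrix.one_mul, Matrix.mul_assoc,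
      Matrix.mul_nonsing_inv _ hSu, Matrix.mul_one]
    abel
  have hpsd : (S⁻¹ - K).PosSemidef := by
    have h := hS.posSemidef.mul_mul_conjTranspose_same (S⁻¹ - K)
    rwa [conjTranspose_eq_transpose_of_trivial, hdiff] at h
  have h := hpsd.mul_mul_conjTranspose_same (A * X * Cᵀ)
  rw [conjTranspose_eq_transpose_of_trivial] at h
  convert h using 1
  rw [hDt, hDP, hK, Matrix.mul_sub, Matrix.sub_mul]
  simp only [transpose_mul, transpose_transpose, hXt, Matrix.mul_assoc]
end

section
/- Threshold condition for the XOR operation to beat forwarding y₁ (conditions (13) and (15)): Let a ≠ 0, P > 0, s₁ > 0, s₂ > 0, λ₁ ∈ [0,1], λ₂ ∈ [0,1), and q ∈ ℝ. Define E_XOR = a²P + q − (λ₁ + λ₂ − λ₁λ₂) a²P²/(P + 1/(s₁+s₂)) and E_F1 = a²P + q − λ₂ a²P²/(P + 1/(s₁+s₂)) − (1−λ₂) a²P²/(P + 1/s₁). Then the following are equivalent: (i) E_XOR < E_F1; (ii) λ₁(1−λ₂)/(P + 1/(s₁+s₂)) > (1−λ₂)/(P + 1/s₁); (iii) λ₁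 > (P + 1/(s₁+s₂))/(P + 1/s₁); (iv) λ₁/s₁ − 1/(s₁+s₂) > P(1−λ₁). -/
/-- Threshold condition for the XOR operation to beat forwarding y₁
(conditions (13) and (15)): the XOR relay operation yields a strictly smaller one-step
expected error covariance than forwarding y₁ exactly when λ₁ exceeds the stated
threshold. -/
theorem xor_beats_forwarding_y1_iff
    (a P s₁ s₂ lam₁ lam₂ q : ℝ)
    (ha : a ≠ 0) (hP : 0 < P) (hs₁ : 0 < s₁) (hs₂ : 0 < s₂)
    (h₁ : lam₁ ∈ Set.Icc (0 : ℝ) 1) (h₂ : lam₂ ∈ Set.Ico (0 : ℝ) 1)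
    (EXOR EF1 : ℝ)
    (hEXOR : EXOR = a ^ 2 * P + q -
      (lam₁ + lam₂ - lam₁ * lam₂) * a ^ 2 * P ^ 2 / (P + 1 / (s₁ + s₂)))
    (hEF1 : EF1 = a ^ 2 * P + q - lam₂ * a ^ 2 * P ^ 2 / (P + 1 / (s₁ + s₂)) -
      (1 - lam₂) * a ^ 2 * P ^ 2 / (P + 1 / s₁)) :
    (EXOR < EF1 ↔
      lam₁ * (1 - lam₂) / (P + 1 / (s₁ + s₂)) > (1 - lam₂) / (P + 1 / s₁)) ∧
    (EXOR < EF1 ↔ lam₁ > (P + 1 / (s₁ + s₂)) / (P + 1 / s₁)) ∧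
    (EXOR < EF1 ↔ lam₁ / s₁ - 1 / (s₁ + s₂) > P * (1 - lam₁)) := by
  have hA : 0 < P + 1 / (s₁ + s₂) := by positivity
  have hB : 0 < P + 1 / s₁ := by positivity
  have hC : 0 < 1 - lam₂ := by linarith [h₂.2]
  have hK : 0 < a ^ 2 * P ^ 2 := by positivity
  have e4 : lam₁ / s₁ - 1 / (s₁ + s₂) - P * (1 - lam₁)
      = lam₁ * (P + 1 / s₁) - (P + 1 / (s₁ + s₂)) := by ring
  have k4 : lam₁ / s₁ - 1 / (s₁ + s₂) > P * (1 - lam₁) ↔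
      P + 1 / (s₁ + s₂) < lam₁ * (P + 1 / s₁) := by
    constructor <;> intro h <;> linarith
  rw [k4]
  clear k4 e4
  generalize P + 1 / (s₁ + s₂) = A at *
  generalize P + 1 / s₁ = B at *
  have k3 : lam₁ > A / B ↔ A < lam₁ * B := div_lt_iff₀ hB
  have k1 : EXOR < EF1 ↔ lam₁ * (1 - lam₂) / A > (1 - lam₂) / B := by
    have e : EF1 - EXOR = (a ^ 2 * P ^ 2) * (lam₁ * (1 - lam₂) / A - (1 - lam₂) / B) := by
      rw [hEXOR, hEF1]; ring
    rw [← sub_pos, e, mul_pos_iff_of_pos_left hK, sub_pos]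
  have k2 : lam₁ * (1 - lam₂) / A > (1 - lam₂) / B ↔ A < lam₁ * B := by
    rw [gt_iff_lt, div_lt_div_iff₀ hB hA,
      show lam₁ * (1 - lam₂) * B = (1 - lam₂) * (lam₁ * B) by ring, mul_lt_mul_iff_right₀ hC]
  exact ⟨k1, (k1.trans k2).trans k3.symm, k1.trans k2⟩
end

section
/- Threshold condition for the XOR operation to beat forwarding y₂ (conditions (14) and (16)): Let a ≠ 0, P > 0, s₁ > 0, s₂ > 0, λ₁ ∈ [0,1), λ₂ ∈ [0,1], and q ∈ ℝ. Define E_XOR = a²P + q − (λ₁ + λ₂ − λ₁λ₂) a²P²/(P + 1/(s₁+s₂)) and E_F2 = a²P + q − λ₁ a²P²/(P + 1/(s₁+s₂)) − (1−λ₁) a²P²/(P + 1/s₂). Then the following are equivalent: (i) E_XOR < E_F2; (ii) λ₂ > (P + 1/(s₁+s₂))/(P + 1/s₂); (iii) λ₂/s₂ − 1/(s₁+s₂) > P(1−λ₂). -/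
/-- Threshold condition for the XOR operation to beat forwarding y₂
(conditions (14) and (16)): the XOR relay operation yields a strictly smaller one-step
expected error covariance than forwarding y₂ exactly when λ₂ exceeds the stated
threshold. -/
theorem xor_beats_forwarding_y2_iff
    (a P s₁ s₂ lam₁ lam₂ q : ℝ)
    (ha : a ≠ 0) (hP : 0 < P) (hs₁ : 0 < s₁) (hs₂ : 0 < s₂)
    (h₁ : lam₁ ∈ Set.Ico (0 : ℝ) 1) (h₂ : lam₂ ∈ Set.Icc (0 : ℝ) 1)
    (EXOR EF2 : ℝ)
    (hEXOR : EXOR = a ^ 2 * P + q -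
      (lam₁ + lam₂ - lam₁ * lam₂) * a ^ 2 * P ^ 2 / (P + 1 / (s₁ + s₂)))
    (hEF2 : EF2 = a ^ 2 * P + q - lam₁ * a ^ 2 * P ^ 2 / (P + 1 / (s₁ + s₂)) -
      (1 - lam₁) * a ^ 2 * P ^ 2 / (P + 1 / s₂)) :
    (EXOR < EF2 ↔ lam₂ > (P + 1 / (s₁ + s₂)) / (P + 1 / s₂)) ∧
    (EXOR < EF2 ↔ lam₂ / s₂ - 1 / (s₁ + s₂) > P * (1 - lam₂)) := by
  have hu : 0 < 1 / (s₁ + s₂) := by positivity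
  have hv : 0 < 1 / s₂ := by positivity
  have hdiv : lam₂ / s₂ = lam₂ * (1 / s₂) := by ring
  rw [hdiv]
  generalize 1 / (s₁ + s₂) = u at *
  generalize 1 / s₂ = v at *
  have hA : 0 < P + u := by linarith
  have hB : 0 < P + v := by linarith
  have hl : 0 < 1 - lam₁ := by linarith [h₁.2]
  have hK : 0 < (1 - lam₁) * a ^ 2 * P ^ 2 / ((P + u) * (P + v)) := by positivity
  have hdiff : EF2 - EXOR =
      (1 - lam₁) * a ^ 2 * P ^ 2 / ((P + u) * (P + v)) * (lam₂ * (P + v) - (P + u)) := by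
    rw [hEF2, hEXOR]
    have hA' := hA.ne'
    have hB' := hB.ne'
    field_simp
    ring
  have key : EXOR < EF2 ↔ P + u < lam₂ * (P + v) := by
    rw [← sub_pos, hdiff, mul_pos_iff_of_pos_left hK, sub_pos]
  refine ⟨?_, ?_⟩
  · rw [key, gt_iff_lt, div_lt_iff₀ hB]
  · rw [key]
    constructor <;> intro h <;> linarith
end

section
/- At high signal-to-noise ratios the XOR operation cannot beat both forwarding options: Let λ₁, λ₂ ∈ [0,1) and P > 0. Then there exists S > 0 such that for all s₁ > 0 and s₂ > 0 with s₁ ≥ S or s₂ ≥ S, the two conditions λ₁/s₁ − 1/(s₁+s₂) > P(1−λ₁) and λ₂/s₂ − 1/(s₁+s₂) > P(1−λ₂) do not both hold. -/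
lemma snr_aux (a P s t : ℝ) (ha1 : a < 1) (hP : 0 < P) (hs : 0 < s)
    (ht : 0 < t) (h : 1 / (P * (1 - a)) ≤ s) : a / s - 1 / t ≤ P * (1 - a) := by
  have hq : 0 < P * (1 - a) := mul_pos hP (by linarith)
  have h1 : 1 ≤ s * (P * (1 - a)) := (div_le_iff₀ hq).1 h
  have h2 : a / s ≤ P * (1 - a) := by
    rw [div_le_iff₀ hs]; linarith
  have h3 : 0 < 1 / t := by positivity
  linarith

/-- At high signal-to-noise ratios the XOR operation cannot beat both forwarding
options: for `λ₁, λ₂ ∈ [0,1)` and `P > 0`, there exists `S > 0` such that whenever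
`s₁ ≥ S` or `s₂ ≥ S` (with `s₁, s₂ > 0`), the two threshold conditions cannot both
hold. -/
theorem xor_cannot_beat_both_at_high_snr
    (lam₁ lam₂ P : ℝ)
    (h₁ : lam₁ ∈ Set.Ico (0 : ℝ) 1) (h₂ : lam₂ ∈ Set.Ico (0 : ℝ) 1)
    (hP : 0 < P) :
    ∃ S > (0 : ℝ), ∀ s₁ > (0 : ℝ), ∀ s₂ > (0 : ℝ), (S ≤ s₁ ∨ S ≤ s₂) →
      ¬(lam₁ / s₁ - 1 / (s₁ + s₂) > P * (1 - lam₁) ∧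
        lam₂ / s₂ - 1 / (s₁ + s₂) > P * (1 - lam₂)) := by
  have q1 : 0 < 1 / (P * (1 - lam₁)) := one_div_pos.2 (mul_pos hP (by linarith [h₁.2]))
  have q2 : 0 < 1 / (P * (1 - lam₂)) := one_div_pos.2 (mul_pos hP (by linarith [h₂.2]))
  refine ⟨1 / (P * (1 - lam₁)) + 1 / (P * (1 - lam₂)), by linarith, ?_⟩
  rintro s₁ hs₁ s₂ hs₂ hS ⟨hA, hB⟩
  have ht : 0 < s₁ + s₂ := add_pos hs₁ hs₂
  rcases hS with hS | hS
  · exact absurd hA (not_lt.2 (snr_aux lam₁ P s₁ _ h₁.2 hP hs₁ ht (by linarith)))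
  · exact absurd hB (not_lt.2 (snr_aux lam₂ P s₂ _ h₂.2 hP hs₂ ht (by linarith)))
end
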